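/- If A and B are δ-closed subsets of a metric space X with A ∩ B ≠ ∅, then for every b ∈ B \ A the gate g_A(b) lies in A ∩ B. -/

import Mathlib

/-- `g` is a gate for `b` in `A`: `g ∈ A` and every `a ∈ A` satisfies
`d(b,a) = d(b,g) + d(g,a)`. -/
def IsGate {X : Type*} [MetricSpace X] (A : Set X) (b g : X) : Prop :=
  g ∈ A ∧ ∀ a ∈ A, dist b a = dist b g + dist g a

/-- `A` is gated in `X`: every point outside `A` has a gate in `A`. -/
def Gated {X : Type*} [MetricSpace X] (A : Set X) : Prop :=
  ∀ b ∉ A, ∃ g, IsGate A b g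

/-- `g` assigns to each point outside `A` a gate in `A`. -/
def GateMap {X : Type*} [MetricSpace X] (A : Set X) (g : X → X) : Prop :=
  ∀ b ∉ A, IsGate A b (g b)

/-- `A` is δ-closed in `X`, witnessed by the gate map `g`. -/
def DeltaClosedWith {X : Type*} [MetricSpace X] (δ : ℝ) (A : Set X) (g : X → X) : Prop :=
  GateMap A g ∧
  ∀ b ∉ A, ∀ b' ∉ A, δ < dist (g b) (g b') →
    dist b b' = dist b (g b) + dist (g b) (g b') + dist (g b') b'

/-- `A` is δ-closed in the ambient metric space `X`. -/
def DeltaClosed {X : Type*} [MetricSpace X] (δ : ℝ) (A : Set X) : Prop :=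
  ∃ g : X → X, DeltaClosedWith δ A g

/-- The triple `(x, y, z)` is geodetic: `y` lies metrically between `x` and `z`, that is, the
triangle inequality through `y` is an equality. A gate of `x` in `A` is a `y ∈ A` making this
triple geodetic for every `z ∈ A`. -/
def Geodetic {X : Type*} [Dist X] (x y z : X) : Prop :=
  dist x z = dist x y + dist y z

/-- `A` is convex in the metric sense: it contains every point metrically between two of its
points. This is the property of gated sets that locates gates into another set. -/
def GeodeticallyConvex {X : Type*} [Dist X] (A : Set X) : Prop :=
  ∀ ⦃a₁⦄, a₁ ∈ A → ∀ ⦃a₂⦄, a₂ ∈ A → ∀ ⦃b⦄, Geodetic a₁ b a₂ → b ∈ A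

section Gates

variable {X : Type*} [MetricSpace X] {A B : Set X} {a a₁ a₂ b g : X}

theorem IsGate.mem (hg : IsGate A b g) : g ∈ A :=
  hg.1

theorem IsGate.geodetic (hg : IsGate A b g) (ha : a ∈ A) : Geodetic b g a :=
  hg.2 a ha

theorem IsGate.eq_of_geodetic (hg : IsGate A b g) (ha₁ : a₁ ∈ A) (ha₂ : a₂ ∈ A)
    (hb : Geodetic a₁ b a₂) : b = g := by
  have detour : dist a₁ a₂ = 2 * dist b g + (dist a₁ g + dist g a₂) :=
    calc dist a₁ a₂ = dist b a₁ + dist b a₂ := by rw [hb, dist_comm a₁ b]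
      _ = (dist b g + dist g a₁) + (dist b g + dist g a₂) := by
        rw [hg.geodetic ha₁, hg.geodetic ha₂]
      _ = 2 * dist b g + (dist a₁ g + dist g a₂) := by rw [dist_comm g a₁]; ring
  have dist_gate_nonpos : dist b g ≤ 0 := by linarith [dist_triangle a₁ g a₂]
  exact dist_le_zero.mp dist_gate_nonpos

theorem Gated.geodeticallyConvex (hA : Gated A) : GeodeticallyConvex A := by
  intro a₁ ha₁ a₂ ha₂ b hb
  by_contra hbA
  obtain ⟨g, hg⟩ := hA b hbA
  have hbg : b = g := hg.eq_of_geodetic ha₁ ha₂ hb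
  exact hbA (hbg ▸ hg.mem)

theorem GateMap.gated {f : X → X} (hf : GateMap A f) : Gated A :=
  fun b hb => ⟨f b, hf b hb⟩

theorem DeltaClosed.gated {δ : ℝ} (hA : DeltaClosed δ A) : Gated A :=
  let ⟨_, hf⟩ := hA
  hf.1.gated

theorem gate_mem_inter_general (hB : GeodeticallyConvex B) (hAB : (A ∩ B).Nonempty)
    (hb : b ∈ B) (hg : IsGate A b g) : g ∈ A ∩ B := by
  obtain ⟨c, hcA, hcB⟩ := hAB
  exact ⟨hg.mem, hB hb hcB (hg.geodetic hcA)⟩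

end Gates

/-- If `A`, `B` are δ-closed in `X` with `A ∩ B ≠ ∅`, then for `b ∈ B \ A` the
gate of `b` in `A` lies in `A ∩ B`. -/
theorem gate_mem_inter {X : Type*} [MetricSpace X] (δ : ℝ) (hδ : 0 ≤ δ)
    (A B : Set X) (hA : DeltaClosed δ A) (hB : DeltaClosed δ B)
    (hAB : (A ∩ B).Nonempty) (b : X) (hb : b ∈ B \ A)
    (g : X) (hg : IsGate A b g) : g ∈ A ∩ B :=
  gate_mem_inter_general hB.gated.geodeticallyConvex hAB hb.1 hg
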